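/- Let R be a commutative ring and A and B be flat R-algebras such that A ⊗_R B is noetherian. (i) If A ⊗_R B is almost Cohen-Macaulay, then A_p and B_q are almost Cohen-Macaulay for any p ∈ Spec(A) and q ∈ Spec(B) with p ∩ R = q ∩ R. (ii) Conversely, if for any p ∈ Spec(A) and q ∈ Spec(B) with p ∩ R = q ∩ R the rings A_p and B_q are almost Cohen-Macaulay and one of them is Cohen-Macaulay, then A ⊗_R B is almost Cohen-Macaulay. -/

import Mathlib

noncomputable section

open TensorProduct

universe u v w





/-- The depth of the ideal `I` on the module `M`: the supremum of lengths of
`M`-regular sequences with entries in `I`. -/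
noncomputable def idealDepth (A : Type u) [CommRing A] (I : Ideal A)
    (M : Type v) [AddCommGroup M] [Module A M] : ℕ∞ :=
  sSup {n : ℕ∞ | ∃ rs : List A, (rs.length : ℕ∞) = n ∧ (∀ r ∈ rs, r ∈ I) ∧
    RingTheory.Sequence.IsRegular M rs}

/-- The depth of a module over a local ring. -/
noncomputable def localDepth (A : Type u) [CommRing A] [IsLocalRing A]
    (M : Type v) [AddCommGroup M] [Module A M] : ℕ∞ :=
  idealDepth A (IsLocalRing.maximalIdeal A) M

/-- The (Krull) dimension of a module, i.e. the Krull dimension of its support. -/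
noncomputable def supportDim (A : Type u) [CommRing A]
    (M : Type v) [AddCommGroup M] [Module A M] : WithBot ℕ∞ :=
  Order.krullDim (Module.support A M)

/-- `depth (M_P)` : the depth of the localization of `M` at a prime `P`,
over the local ring `A_P`. -/
noncomputable def depthAt (A : Type u) [CommRing A]
    (M : Type v) [AddCommGroup M] [Module A M] (P : PrimeSpectrum A) : ℕ∞ :=
  localDepth (Localization.AtPrime P.asIdeal) (LocalizedModule P.asIdeal.primeCompl M)

/-- `ht_M(P) = dim (M_P)` : the height of a prime `P` in the support of `M`,
i.e. the dimension of the localized module `M_P` over `A_P`. -/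
noncomputable def heightAt (A : Type u) [CommRing A]
    (M : Type v) [AddCommGroup M] [Module A M] (P : PrimeSpectrum A) : WithBot ℕ∞ :=
  supportDim (Localization.AtPrime P.asIdeal) (LocalizedModule P.asIdeal.primeCompl M)

/-- Serre's condition `(S_n)` for a module: for every `P` in the support,
`depth (M_P) ≥ min (n, ht_M(P))`. -/
def SerreCondS (A : Type u) [CommRing A] (n : ℕ)
    (M : Type v) [AddCommGroup M] [Module A M] : Prop :=
  ∀ P ∈ Module.support A M,
    min (n : WithBot ℕ∞) (heightAt A M P) ≤ (depthAt A M P : WithBot ℕ∞)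

/-- The condition `(C_n)` for a module: for every `P` in the support,
`depth (M_P) ≥ min (n, ht_M(P)) - 1`, equivalently
`min (n, ht_M(P)) ≤ depth (M_P) + 1`. -/
def CondC (A : Type u) [CommRing A] (n : ℕ)
    (M : Type v) [AddCommGroup M] [Module A M] : Prop :=
  ∀ P ∈ Module.support A M,
    min (n : WithBot ℕ∞) (heightAt A M P) ≤ (depthAt A M P : WithBot ℕ∞) + 1

/-- A module `M` is almost Cohen-Macaulay if `depth(P, M) = depth (M_P)` for every
`P` in the support of `M` (Kang's definition). -/
def IsAlmostCMModule (A : Type u) [CommRing A]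
    (M : Type v) [AddCommGroup M] [Module A M] : Prop :=
  ∀ P ∈ Module.support A M, idealDepth A P.asIdeal M = depthAt A M P

/-- A module `M` is Cohen-Macaulay if `depth (M_P) = dim (M_P)` for every `P` in its
support. -/
def IsCMModule (A : Type u) [CommRing A]
    (M : Type v) [AddCommGroup M] [Module A M] : Prop :=
  ∀ P ∈ Module.support A M, (depthAt A M P : WithBot ℕ∞) = heightAt A M P

/-- A ring is almost Cohen-Macaulay if it is an almost Cohen-Macaulay module over
itself. -/
abbrev IsAlmostCMRing (A : Type u) [CommRing A] : Prop := IsAlmostCMModule A A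

/-- A ring is Cohen-Macaulay if it is a Cohen-Macaulay module over itself, i.e. all its
localizations at primes have depth equal to dimension. -/
abbrev IsCMRing (A : Type u) [CommRing A] : Prop := IsCMModule A A

/-- A ring satisfies `(C_n)` if it does so as a module over itself. -/
abbrev RingCondC (A : Type u) [CommRing A] (n : ℕ) : Prop := CondC A n A

/-- A ring satisfies `(S_n)` if it does so as a module over itself. -/
abbrev RingSerreCondS (A : Type u) [CommRing A] (n : ℕ) : Prop := SerreCondS A n A


/-- A finitely generated module over a noetherian local ring is almost Cohen-Macaulay
iff `dim M ≤ depth M + 1`. -/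
def IsLocalACM (A : Type u) [CommRing A] [IsLocalRing A]
    (M : Type v) [AddCommGroup M] [Module A M] : Prop :=
  supportDim A M ≤ (localDepth A M : WithBot ℕ∞) + 1

/-- A noetherian local ring is Cohen-Macaulay if its depth equals its dimension. -/
def IsLocalCMRing (A : Type u) [CommRing A] [IsLocalRing A] : Prop :=
  (localDepth A A : WithBot ℕ∞) = ringKrullDim A
/-! The Cohen-Macaulay defect of a noetherian local ring is `d = dim - depth`. By Kang's criterion a
noetherian ring is almost Cohen-Macaulay iff all its local rings have defect at most one.

The defect is additive along flat local homomorphisms: `d(C) = d(A) + d(C / 𝔪_A C)`. Extending the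
ground field of `D` from `k` to `K` preserves the defect of noetherian local rings: such a local
ring of `K ⊗[k] D` has the defect of a local ring of `F ⊗[k] D` for some finitely generated `F`, and
`F` is reached by adjoining one element at a time, with closed fibres that are local rings of
principal ideal rings.

Let `Q` be a prime of `A ⊗[R] B` over `p`, `q` and `r` in `A`, `B` and `R`. The closed fibre of
`A_p → (A ⊗[R] B)_Q` is a local ring of `κ(p) ⊗ (κ(r) ⊗[R] B)`, hence has the defect of the closed
fibre of `R_r → B_q`, so that `d((A ⊗[R] B)_Q) + d(R_r) = d(A_p) + d(B_q)`. -/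

section Depth

open RingTheory.Sequence CategoryTheory Abelian

variable {A : Type u} [CommRing A] {I : Ideal A}
  {M : Type v} [AddCommGroup M] [Module A M]

theorem isRegular_take {rs : List A} (h : IsRegular M rs) (n : ℕ) : IsRegular M (rs.take n) := by
  have hweak := ((isWeaklyRegular_append_iff M (rs.take n) (rs.drop n)).mp
    (by simpa using h.toIsWeaklyRegular)).1
  have hle : Ideal.ofList (rs.take n) ≤ Ideal.ofList rs :=
    Ideal.span_mono fun x hx => List.mem_of_mem_take hx
  exact ⟨hweak, fun e => h.top_ne_smul
    (le_antisymm (e.le.trans (Submodule.smul_mono_left hle)) le_top)⟩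

theorem natCast_le_idealDepth_iff [Nontrivial M] {n : ℕ} :
    (n : ℕ∞) ≤ idealDepth A I M ↔
      ∃ rs : List A, rs.length = n ∧ (∀ r ∈ rs, r ∈ I) ∧ IsRegular M rs := by
  constructor
  · intro h
    rcases Nat.eq_zero_or_pos n with rfl | hn
    · exact ⟨[], rfl, by simp, .nil A M⟩
    obtain ⟨m, ⟨rs, rfl, hI, hr⟩, hm⟩ := lt_sSup_iff.mp
      (lt_of_lt_of_le (Nat.cast_lt.mpr (Nat.sub_lt hn one_pos)) h)
    have hlen : n - 1 < rs.length := by exact_mod_cast hm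
    exact ⟨rs.take n, by rw [List.length_take]; omega,
      fun r hr => hI r (List.mem_of_mem_take hr), isRegular_take hr n⟩
  · rintro ⟨rs, rfl, hI, hr⟩
    exact le_sSup ⟨rs, rfl, hI, hr⟩

theorem idealDepth_mono {J : Ideal A} (h : I ≤ J) : idealDepth A I M ≤ idealDepth A J M :=
  sSup_le_sSup fun _ ⟨rs, hl, hI, hr⟩ => ⟨rs, hl, fun r hr => h (hI r hr), hr⟩

theorem idealDepth_congr_linearEquiv {M' : Type w} [AddCommGroup M'] [Module A M']
    (e : M ≃ₗ[A] M') : idealDepth A I M = idealDepth A I M' := by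
  simp only [idealDepth, e.isRegular_congr]

theorem idealDepth_comap_eq_of_surjective {F : Type*} [CommRing F] {M' : Type*} [AddCommGroup M']
    [Module F M'] (f : A →+* F) (hf : Function.Surjective f) (e : M ≃+ M')
    (he : ∀ a m, e (a • m) = f a • e m) (J : Ideal F) :
    idealDepth A (J.comap f) M = idealDepth F J M' := by
  have isRegular_map_iff (rs : List A) : IsRegular M rs ↔ IsRegular M' (rs.map f) :=
    e.isRegular_congr <| List.forall₂_map_right_iff.mpr <| List.forall₂_same.mpr fun r _ x => he r x
  refine le_antisymm (sSup_le ?_) (sSup_le ?_)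
  · rintro _ ⟨rs, rfl, hmem, hrs⟩
    exact le_sSup ⟨rs.map f, by simp, by simpa using hmem, (isRegular_map_iff rs).mp hrs⟩
  · rintro _ ⟨rs, rfl, hmem, hrs⟩
    obtain ⟨rs, rfl⟩ := hf.list_map rs
    exact le_sSup ⟨rs, by simp, by simpa using hmem, (isRegular_map_iff rs).mpr hrs⟩

theorem nontrivial_of_ideal_smul_ne_top (h : I • (⊤ : Submodule A M) ≠ ⊤) : Nontrivial M :=
  (Submodule.nontrivial_iff A).mp (nontrivial_of_ne _ _ h)

theorem ideal_smul_quotient_ne_top {N : Submodule A M} (hN : N ≤ I • ⊤)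
    (h : I • (⊤ : Submodule A M) ≠ ⊤) : I • (⊤ : Submodule A (M ⧸ N)) ≠ ⊤ := by
  intro htop
  refine h ?_
  simpa [Submodule.comap_smul_top_of_surjective I _ N.mkQ_surjective, hN] using
    congrArg (Submodule.comap N.mkQ) htop

theorem ideal_smul_quotSMulTop_ne_top {x : A} (hx : x ∈ I) (h : I • (⊤ : Submodule A M) ≠ ⊤) :
    I • (⊤ : Submodule A (QuotSMulTop x M)) ≠ ⊤ := by
  refine ideal_smul_quotient_ne_top ?_ h
  rw [← Submodule.ideal_span_singleton_smul]
  exact Submodule.smul_mono_left ((Ideal.span_singleton_le_iff_mem I).mpr hx)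

theorem nontrivial_quotSMulTop {x : A} (hx : x ∈ I) (h : I • (⊤ : Submodule A M) ≠ ⊤) :
    Nontrivial (QuotSMulTop x M) :=
  nontrivial_of_ideal_smul_ne_top (ideal_smul_quotSMulTop_ne_top hx h)

theorem idealDepth_eq_zero_iff (hI : I • (⊤ : Submodule A M) ≠ ⊤) :
    idealDepth A I M = 0 ↔ ∀ x ∈ I, ¬IsSMulRegular M x := by
  have := nontrivial_of_ideal_smul_ne_top hI
  constructor
  · intro h x hx hreg
    have := nontrivial_quotSMulTop hx hI
    have hle : ((1 : ℕ) : ℕ∞) ≤ idealDepth A I M :=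
      natCast_le_idealDepth_iff.mpr ⟨[x], rfl, by simpa, .cons hreg (.nil A _)⟩
    simp [h] at hle
  · intro h
    refine le_antisymm (sSup_le ?_) zero_le
    rintro _ ⟨_ | ⟨r, rs⟩, rfl, hmem, hrs⟩
    · simp
    · exact absurd ((isRegular_cons_iff M r rs).mp hrs).1 (h r (hmem r (by simp)))

theorem idealDepth_eq_zero_iff_exists_associatedPrime [IsNoetherianRing A] [Module.Finite A M]
    (hI : I • (⊤ : Submodule A M) ≠ ⊤) :
    idealDepth A I M = 0 ↔ ∃ P ∈ associatedPrimes A M, I ≤ P := by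
  have hcover : idealDepth A I M = 0 ↔ (I : Set A) ⊆ ⋃ P ∈ associatedPrimes A M, (P : Set A) := by
    rw [idealDepth_eq_zero_iff hI, biUnion_associatedPrimes_eq_compl_regular]
    rfl
  exact hcover.trans (Ideal.subset_union_prime_finite (associatedPrimes.finite A M) (f := id) ⊥ ⊥
    fun P hP _ _ => hP.isPrime)

theorem subsingleton_ext_quotSMulTop [Small.{v} A] (N M : ModuleCat.{v} A) {n : ℕ} {x : A}
    (hreg : IsSMulRegular M x) (h : ∀ i < n, Subsingleton (Ext N M i)) :
    ∀ i < n - 1, Subsingleton (Ext N (ModuleCat.of A (QuotSMulTop x M)) i) := by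
  intro i hi
  have hzero := AddCommGrpCat.isZero_of_iff_subsingleton.mpr (h i (by omega))
  have hzero_succ := AddCommGrpCat.isZero_of_iff_subsingleton.mpr (h (i + 1) (by omega))
  exact AddCommGrpCat.subsingleton_of_isZero <| ShortComplex.Exact.isZero_of_both_zeros
    ((Ext.covariant_sequence_exact₃' N hreg.smulShortComplex_shortExact) i (i + 1) rfl)
    (hzero.eq_zero_of_src _) (hzero_succ.eq_zero_of_tgt _)

section Noetherian

variable [Small.{v} A] [IsNoetherianRing A] [Module.Finite A M]

/-- By Rees, regular sequences of length `n` in `I` exist iff `Ext^i(A/I, M) = 0` for all `i < n`, a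
condition which the long exact sequence of multiplication by `x` lowers by one on `M / x M`. -/
theorem exists_isRegular_quotSMulTop
    (hI : I • (⊤ : Submodule A M) ≠ ⊤) {x : A} (hx : x ∈ I) (hreg : IsSMulRegular M x)
    {rs : List A} (hmem : ∀ r ∈ rs, r ∈ I) (hrs : IsRegular M rs) :
    ∃ rs' : List A, rs'.length = rs.length - 1 ∧ (∀ r ∈ rs', r ∈ I) ∧
      IsRegular (QuotSMulTop x M) rs' := by
  have hfin : Module.Finite A (Shrink.{v} (A ⧸ I)) :=
    Module.Finite.equiv (Shrink.linearEquiv A (A ⧸ I)).symm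
  have hsupp : Module.support A (Shrink.{v} (A ⧸ I)) = PrimeSpectrum.zeroLocus I := by
    rw [(Shrink.linearEquiv A _).support_eq, Module.support_eq_zeroLocus,
      Ideal.annihilator_quotient]
  have hext := ModuleCat.subsingleton_ext_of_exists_isRegular I
    (ModuleCat.of A (Shrink.{v} (A ⧸ I))) hsupp.subset (ModuleCat.of A M) hI.lt_top rs hmem hrs
  exact ModuleCat.exists_isRegular_of_exists_subsingleton_ext I (rs.length - 1)
    (ModuleCat.of A (QuotSMulTop x M)) (ideal_smul_quotSMulTop_ne_top hx hI).lt_top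
    (ModuleCat.of A (Shrink.{v} (A ⧸ I))) hsupp
    (subsingleton_ext_quotSMulTop _ (ModuleCat.of A M) hreg hext)

theorem idealDepth_eq_idealDepth_quotSMulTop_add_one
    (hI : I • (⊤ : Submodule A M) ≠ ⊤) {x : A} (hx : x ∈ I) (hreg : IsSMulRegular M x) :
    idealDepth A I M = idealDepth A I (QuotSMulTop x M) + 1 := by
  have := nontrivial_of_ideal_smul_ne_top hI
  have := nontrivial_quotSMulTop hx hI
  refine le_antisymm (sSup_le ?_) (ENat.forall_natCast_le_iff_le.mp fun n hn => ?_)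
  · rintro _ ⟨rs, rfl, hmem, hrs⟩
    obtain ⟨rs', hl, hmem', hrs'⟩ := exists_isRegular_quotSMulTop hI hx hreg hmem hrs
    calc (rs.length : ℕ∞) ≤ ((rs.length - 1 : ℕ) : ℕ∞) + 1 := by
          norm_cast; omega
      _ ≤ idealDepth A I (QuotSMulTop x M) + 1 := by
          gcongr
          exact natCast_le_idealDepth_iff.mpr ⟨rs', hl, hmem', hrs'⟩
  · rcases n with _ | n
    · simp
    have hn' : (n : ℕ∞) ≤ idealDepth A I (QuotSMulTop x M) := by
      rw [Nat.cast_succ] at hn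
      exact (ENat.add_le_add_iff_right ENat.one_ne_top).mp hn
    obtain ⟨rs, rfl, hmem, hrs⟩ := natCast_le_idealDepth_iff.mp hn'
    exact natCast_le_idealDepth_iff.mpr
      ⟨x :: rs, rfl, by simpa [hx] using hmem, .cons hreg hrs⟩

theorem idealDepth_eq_idealDepth_quotient_ofList_add_length
    (hI : I • (⊤ : Submodule A M) ≠ ⊤) {rs : List A}
    (hmem : ∀ r ∈ rs, r ∈ I) (hrs : IsWeaklyRegular M rs) :
    idealDepth A I M =
      idealDepth A I (M ⧸ (Ideal.ofList rs • ⊤ : Submodule A M)) + rs.length := by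
  induction rs generalizing M with
  | nil =>
    have hbot : (Ideal.ofList ([] : List A) • ⊤ : Submodule A M) = ⊥ := by simp
    simpa using (idealDepth_congr_linearEquiv (Submodule.quotEquivOfEqBot _ hbot)).symm
  | cons r rs ih =>
    rw [isWeaklyRegular_cons_iff] at hrs
    rw [List.forall_mem_cons] at hmem
    rw [idealDepth_eq_idealDepth_quotSMulTop_add_one hI hmem.1 hrs.1,
      ih (ideal_smul_quotSMulTop_ne_top hmem.1 hI) hmem.2 hrs.2,
      idealDepth_congr_linearEquiv
        (Submodule.quotOfListConsSMulTopEquivQuotSMulTopInner M r rs)]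
    simp [add_assoc]

end Noetherian

end Depth

section LocalDepth

open IsLocalRing

variable (A : Type u) [CommRing A] [IsLocalRing A]
  (M : Type v) [AddCommGroup M] [Module A M] [Module.Finite A M] [Nontrivial M]

theorem maximalIdeal_smul_top_ne_top : maximalIdeal A • (⊤ : Submodule A M) ≠ ⊤ :=
  (Submodule.top_ne_ideal_smul_of_le_jacobson_annihilator (maximalIdeal_le_jacobson _)).symm

variable {M} in
theorem localDepth_eq_localDepth_quotSMulTop_add_one [Small.{v} A] [IsNoetherianRing A] {x : A}
    (hx : x ∈ maximalIdeal A) (hreg : IsSMulRegular M x) :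
    localDepth A M = localDepth A (QuotSMulTop x M) + 1 :=
  idealDepth_eq_idealDepth_quotSMulTop_add_one (maximalIdeal_smul_top_ne_top A M) hx hreg

variable {M} in
theorem exists_isSMulRegular_of_localDepth_ne_zero (h : localDepth A M ≠ 0) :
    ∃ x ∈ maximalIdeal A, IsSMulRegular M x := by
  by_contra! hcon
  exact h ((idealDepth_eq_zero_iff (maximalIdeal_smul_top_ne_top A M)).mpr hcon)

variable [IsNoetherianRing A]

theorem localDepth_eq_zero_iff : localDepth A M = 0 ↔ maximalIdeal A ∈ associatedPrimes A M := by
  refine (idealDepth_eq_zero_iff_exists_associatedPrime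
    (maximalIdeal_smul_top_ne_top A M)).trans ⟨?_, fun h => ⟨_, h, le_rfl⟩⟩
  rintro ⟨P, hP, hle⟩
  rwa [(maximalIdeal.isMaximal A).eq_of_le hP.isPrime.ne_top hle]

theorem localDepth_le_supportDim : (localDepth A M : WithBot ℕ∞) ≤ Module.supportDim A M := by
  obtain ⟨d, hd⟩ := WithBot.ne_bot_iff_exists.mp (Module.supportDim_ne_bot_of_nontrivial A M)
  rw [← hd, WithBot.coe_le_coe]
  refine sSup_le ?_
  rintro _ ⟨rs, rfl, _, hrs⟩
  have hdim := Module.supportDim_add_length_eq_supportDim_of_isRegular rs hrs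
  have : Nontrivial (M ⧸ (Ideal.ofList rs • ⊤ : Submodule A M)) :=
    Submodule.Quotient.nontrivial_iff.mpr hrs.top_ne_smul.symm
  obtain ⟨e, he⟩ := WithBot.ne_bot_iff_exists.mp
    (Module.supportDim_ne_bot_of_nontrivial A (M ⧸ (Ideal.ofList rs • ⊤ : Submodule A M)))
  rw [← hd, ← he] at hdim
  have hdim' : e + rs.length = d := by exact_mod_cast hdim
  exact hdim' ▸ le_add_self

theorem localDepth_ne_top : localDepth A M ≠ ⊤ := by
  intro h
  have hle := (localDepth_le_supportDim A M).trans (Module.supportDim_le_ringKrullDim A M)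
  rw [h] at hle
  exact (hle.trans_lt ringKrullDim_lt_top).false

end LocalDepth

section QuotSMulTopTensor

open scoped Pointwise

variable {A C : Type*} [CommRing A] [CommRing C] [Algebra A C]
  {N : Type*} [AddCommGroup N] [Module A N] [Module C N] [IsScalarTower A C N]
  {M : Type*} [AddCommGroup M] [Module A M]

theorem finite_tensorProduct_left [Module.Finite C N] [Module.Finite A M] :
    Module.Finite C (N ⊗[A] M) :=
  Module.Finite.equiv (AlgebraTensorModule.cancelBaseChange A C C N M)

/-- The isomorphism `(N ⊗ M) / c (N ⊗ M) ≃ (N / c N) ⊗ M`, for `c` acting on the left factor. -/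
def quotSMulTopTensorEquivLeft (c : C) :
    QuotSMulTop c (N ⊗[A] M) ≃ₗ[C] QuotSMulTop c N ⊗[A] M :=
  QuotSMulTop.congr c (AlgebraTensorModule.cancelBaseChange A C C N M).symm ≪≫ₗ
    (QuotSMulTop.quotSMulTopTensorEquivQuotSMulTop c (C ⊗[A] M) N).symm ≪≫ₗ
    AlgebraTensorModule.cancelBaseChange A C C (QuotSMulTop c N) M

/-- The isomorphism `(N ⊗ M) / a (N ⊗ M) ≃ N ⊗ (M / a M)`, for `a` acting on the right factor. -/
def quotSMulTopTensorEquivRight (a : A) :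
    QuotSMulTop (algebraMap A C a) (N ⊗[A] M) ≃ₗ[C] N ⊗[A] QuotSMulTop a M :=
  QuotSMulTop.congr _ (AlgebraTensorModule.cancelBaseChange A C C N M).symm ≪≫ₗ
    (QuotSMulTop.tensorQuotSMulTopEquivQuotSMulTop _ N (C ⊗[A] M)).symm ≪≫ₗ
    AlgebraTensorModule.congr (.refl C N)
      (QuotSMulTop.algebraMapTensorEquivTensorQuotSMulTop a M C) ≪≫ₗ
    AlgebraTensorModule.cancelBaseChange A C C N (QuotSMulTop a M)

theorem mem_map_smul_top_of_lTensor_mkQ_eq_zero {J : Ideal A} {z : N ⊗[A] M}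
    (hz : LinearMap.lTensor N (J • ⊤ : Submodule A M).mkQ z = 0) :
    z ∈ (J.map (algebraMap A C) • ⊤ : Submodule C (N ⊗[A] M)) := by
  obtain ⟨w, rfl⟩ := (lTensor_exact N (LinearMap.exact_subtype_mkQ (J • ⊤ : Submodule A M))
    (Submodule.mkQ_surjective _) z).mp hz
  clear hz
  induction w using TensorProduct.induction_on with
  | zero => simp
  | add x y hx hy => rw [map_add]; exact add_mem hx hy
  | tmul x y =>
    obtain ⟨y, hy⟩ := y
    rw [LinearMap.lTensor_tmul, Submodule.subtype_apply]
    refine Submodule.smul_induction_on (p := fun y => x ⊗ₜ[A] y ∈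
      (J.map (algebraMap A C) • ⊤ : Submodule C (N ⊗[A] M))) hy ?_ ?_
    · intro r hr m _
      rw [TensorProduct.tmul_smul, ← algebraMap_smul C r]
      exact Submodule.smul_mem_smul (Ideal.mem_map_of_mem _ hr) trivial
    · intro a b ha hb
      rw [TensorProduct.tmul_add]
      exact add_mem ha hb

variable (N M) in
theorem exact_smul_rTensor_mkQ (c : C) :
    Function.Exact (fun y : N ⊗[A] M => c • y)
      (LinearMap.rTensor M ((c • ⊤ : Submodule C N).mkQ.restrictScalars A)) := by
  have hexact : Function.Exact ((LinearMap.lsmul C N c).restrictScalars A)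
      ((c • ⊤ : Submodule C N).mkQ.restrictScalars A) := LinearMap.exact_lsmul_mkQ_smul_top N c
  have hsmul (y : N ⊗[A] M) :
      LinearMap.rTensor M ((LinearMap.lsmul C N c).restrictScalars A) y = c • y := by
    induction y using TensorProduct.induction_on with
    | zero => simp
    | add x y hx hy => rw [map_add, hx, hy, smul_add]
    | tmul x y => simp [TensorProduct.smul_tmul']
  intro x
  simpa only [Set.mem_range, hsmul] using
    rTensor_exact M hexact (Submodule.mkQ_surjective (c • ⊤ : Submodule C N)) x

theorem flat_quotSMulTop_of_isSMulRegular [Module.Flat A N] {c : C}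
    (hc : ∀ I : Ideal A, IsSMulRegular (N ⊗[A] (A ⧸ I)) c) :
    Module.Flat A (QuotSMulTop c N) := by
  rw [Module.Flat.iff_lTensor_injective']
  intro I
  rw [injective_iff_map_eq_zero]
  intro w hw
  let π : N →ₗ[A] QuotSMulTop c N := (c • ⊤ : Submodule C N).mkQ.restrictScalars A
  have hπ : Function.Surjective π := Submodule.mkQ_surjective (c • ⊤ : Submodule C N)
  obtain ⟨w, rfl⟩ := LinearMap.rTensor_surjective I hπ w
  have hcomm : LinearMap.rTensor A π (LinearMap.lTensor N I.subtype w) = 0 := by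
    rw [← hw, ← LinearMap.comp_apply, ← LinearMap.comp_apply, LinearMap.lTensor_comp_rTensor,
      LinearMap.rTensor_comp_lTensor]
  obtain ⟨v, hv : c • v = _⟩ := (exact_smul_rTensor_mkQ N A c _).mp hcomm
  have hexact := lTensor_exact N (LinearMap.exact_subtype_mkQ I) I.mkQ_surjective
  have hv_zero : AlgebraTensorModule.lTensor C N I.mkQ v = 0 := by
    refine (hc I).right_eq_zero_of_smul ?_
    rw [← map_smul, hv]
    exact hexact.apply_apply_eq_zero w
  obtain ⟨v, rfl⟩ := (hexact v).mp hv_zero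
  refine (exact_smul_rTensor_mkQ N I c w).mpr ⟨v, ?_⟩
  refine Module.Flat.lTensor_preserves_injective_linearMap I.subtype I.injective_subtype ?_
  exact ((AlgebraTensorModule.lTensor C N I.subtype).map_smul c v).trans hv

end QuotSMulTopTensor

section FlatRegular

open IsLocalRing

theorem isFiniteLength_quotient_of_mem_minimalPrimes {A : Type*} [CommRing A] [IsLocalRing A]
    [IsNoetherianRing A] (M : Type*) [AddCommGroup M] [Module A M] [Module.Finite A M]
    {I : Ideal A} (hI : maximalIdeal A ∈ I.minimalPrimes) :
    IsFiniteLength A (M ⧸ (I • ⊤ : Submodule A M)) := by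
  have := quotient_artinian_of_mem_minimalPrimes_of_isLocalRing I hI
  have := Module.Finite.of_restrictScalars_finite A (A ⧸ I) (M ⧸ (I • ⊤ : Submodule A M))
  have : IsArtinian (A ⧸ I) (M ⧸ (I • ⊤ : Submodule A M)) := inferInstance
  exact isFiniteLength_iff_isNoetherian_isArtinian.mpr ⟨inferInstance,
    isArtinian_of_surjective_algebraMap (R := A ⧸ I) Ideal.Quotient.mk_surjective⟩

theorem maximalIdeal_mem_minimalPrimes_pow (A : Type*) [CommRing A] [IsLocalRing A] {n : ℕ}
    (hn : n ≠ 0) : maximalIdeal A ∈ (maximalIdeal A ^ n).minimalPrimes :=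
  ⟨⟨inferInstance, Ideal.pow_le_self hn⟩, fun _ hP _ =>
    have := hP.1
    Ideal.IsPrime.le_of_pow_le hP.2⟩

variable {A : Type u} {C : Type v} [CommRing A] [CommRing C] [Algebra A C]
  {N : Type*} [AddCommGroup N] [Module A N] [Module C N] [IsScalarTower A C N] [Module.Flat A N]
  {M : Type*} [AddCommGroup M] [Module A M] [IsLocalRing A] {c : C}

theorem isSMulRegular_tensor_of_isFiniteLength
    (hc : IsSMulRegular (N ⊗[A] (A ⧸ maximalIdeal A)) c) (hM : IsFiniteLength A M) :
    IsSMulRegular (N ⊗[A] M) c := by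
  induction hM with
  | of_subsingleton => exact fun _ _ _ => Subsingleton.elim _ _
  | @of_simple_quotient M _ _ M' _ _ ih =>
    refine isSMulRegular_of_range_eq_ker (f := AlgebraTensorModule.lTensor C N M'.subtype)
      (g := AlgebraTensorModule.lTensor C N M'.mkQ)
      (Module.Flat.lTensor_preserves_injective_linearMap M'.subtype M'.injective_subtype) ?_ ih ?_
    · ext x
      exact ((lTensor_exact N (LinearMap.exact_subtype_mkQ M') M'.mkQ_surjective) x).symm
    · obtain ⟨I, hI, ⟨e⟩⟩ := isSimpleModule_iff_quot_maximal.mp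
        (inferInstance : IsSimpleModule A (M ⧸ M'))
      obtain rfl := IsLocalRing.eq_maximalIdeal hI
      exact ((AlgebraTensorModule.congr (LinearEquiv.refl C N) e).isSMulRegular_congr c).mpr hc

/-- An element annihilated by `c` dies in every `N ⊗ (M / 𝔪 ^ n M)`, hence vanishes by Krull's
intersection theorem over `C`. -/
theorem isSMulRegular_tensor_of_isSMulRegular_residue [IsNoetherianRing A] [IsLocalRing C]
    [IsLocalHom (algebraMap A C)] [IsNoetherianRing C] [Module.Finite C N] [Module.Finite A M]
    (hc : IsSMulRegular (N ⊗[A] (A ⧸ maximalIdeal A)) c) :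
    IsSMulRegular (N ⊗[A] M) c := by
  have := finite_tensorProduct_left (A := A) (C := C) (N := N) (M := M)
  have hmap : (maximalIdeal A).map (algebraMap A C) ≤ maximalIdeal C :=
    ((local_hom_TFAE (algebraMap A C)).out 0 2 rfl rfl).mp inferInstance
  rw [isSMulRegular_iff_right_eq_zero_of_smul]
  intro z hz
  suffices z ∈ (⨅ n, maximalIdeal C ^ n • ⊤ : Submodule C (N ⊗[A] M)) by
    rwa [Ideal.iInf_pow_smul_eq_bot_of_isLocalRing _ (maximalIdeal.isMaximal C).ne_top,
      Submodule.mem_bot] at this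
  refine (Submodule.mem_iInf _).mpr fun n => ?_
  rcases eq_or_ne n 0 with rfl | hn
  · simp
  have hreg := isSMulRegular_tensor_of_isFiniteLength hc
    (isFiniteLength_quotient_of_mem_minimalPrimes M (maximalIdeal_mem_minimalPrimes_pow A hn))
  have hz_zero : AlgebraTensorModule.lTensor C N
      (maximalIdeal A ^ n • ⊤ : Submodule A M).mkQ z = 0 := by
    refine hreg.right_eq_zero_of_smul ?_
    rw [← map_smul, hz, map_zero]
  have hmem := mem_map_smul_top_of_lTensor_mkQ_eq_zero (C := C) hz_zero
  rw [Ideal.map_pow] at hmem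
  exact Submodule.smul_mono_left (Ideal.pow_right_mono hmap n) hmem

end FlatRegular

section FlatLocal

open IsLocalRing

variable {A : Type u} {C : Type v} [CommRing A] [CommRing C] [Algebra A C]
  [IsLocalRing A] [IsLocalRing C] [IsLocalHom (algebraMap A C)]
  (N : Type v) [AddCommGroup N] [Module A N] [Module C N] [IsScalarTower A C N]
  [Module.Flat A N] [Module.Finite C N] [Nontrivial N]

theorem algebraMap_mem_maximalIdeal {a : A} (ha : a ∈ maximalIdeal A) :
    algebraMap A C a ∈ maximalIdeal C :=
  ((local_hom_TFAE (algebraMap A C)).out 0 2 rfl rfl).mp inferInstance (Ideal.mem_map_of_mem _ ha)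

include C in
variable (C) in
theorem faithfullyFlat_of_isLocalHom : Module.FaithfullyFlat A N := by
  refine ⟨fun m hm htop => maximalIdeal_smul_top_ne_top C N ?_⟩
  obtain rfl := IsLocalRing.eq_maximalIdeal hm
  have hle : (maximalIdeal A • ⊤ : Submodule A N) ≤
      (maximalIdeal C • ⊤ : Submodule C N).restrictScalars A := by
    refine Submodule.smul_le.mpr fun r hr n _ => ?_
    rw [Submodule.restrictScalars_mem, ← algebraMap_smul C r n]
    exact Submodule.smul_mem_smul (algebraMap_mem_maximalIdeal hr) Submodule.mem_top
  rwa [htop, top_le_iff, Submodule.restrictScalars_eq_top_iff] at hle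

variable [IsNoetherianRing A] [IsNoetherianRing C] (M : Type u) [AddCommGroup M] [Module A M]
  [Module.Finite A M] [Nontrivial M]

/-- If both depths vanish, then the residue field of `A` embeds into `M`, hence `N ⊗ (A / 𝔪)`
embeds into `N ⊗ M`, and the residue field of `C` embeds into the former. -/
theorem localDepth_tensorProduct_eq_zero
    (hN : localDepth C (N ⊗[A] (A ⧸ maximalIdeal A)) = 0) (hM : localDepth A M = 0) :
    localDepth C (N ⊗[A] M) = 0 := by
  have := faithfullyFlat_of_isLocalHom (A := A) C N
  have := finite_tensorProduct_left (A := A) (C := C) (N := N) (M := A ⧸ maximalIdeal A)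
  have := finite_tensorProduct_left (A := A) (C := C) (N := N) (M := M)
  have := Module.FaithfullyFlat.lTensor_nontrivial A N (A ⧸ maximalIdeal A)
  have := Module.FaithfullyFlat.lTensor_nontrivial A N M
  rw [localDepth_eq_zero_iff] at hN hM ⊢
  obtain ⟨f, hf⟩ := ((isAssociatedPrime_iff_exists_injective_linearMap _ _).mp hM).2
  exact associatedPrimes.subset_of_injective (f := AlgebraTensorModule.lTensor C N f)
    (Module.Flat.lTensor_preserves_injective_linearMap f hf) hN

theorem localDepth_tensorProduct_of_localDepth_fiber_eq_zero
    (hN : localDepth C (N ⊗[A] (A ⧸ maximalIdeal A)) = 0) :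
    localDepth C (N ⊗[A] M) = localDepth A M := by
  have := faithfullyFlat_of_isLocalHom (A := A) C N
  obtain ⟨d, hd⟩ := ENat.ne_top_iff_exists.mp (localDepth_ne_top A M)
  induction d generalizing M with
  | zero => rw [← hd, localDepth_tensorProduct_eq_zero N M hN hd.symm, Nat.cast_zero]
  | succ d ih =>
    obtain ⟨x, hx, hreg⟩ := exists_isSMulRegular_of_localDepth_ne_zero A
      (by simp [← hd] : localDepth A M ≠ 0)
    have := nontrivial_quotSMulTop hx (maximalIdeal_smul_top_ne_top A M)
    have := finite_tensorProduct_left (A := A) (C := C) (N := N) (M := M)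
    have := Module.FaithfullyFlat.lTensor_nontrivial A N M
    have hregN : IsSMulRegular (N ⊗[A] M) (algebraMap A C x) :=
      fun a b hab => hreg.lTensor N (by simpa using hab)
    have hM := localDepth_eq_localDepth_quotSMulTop_add_one A hx hreg
    have hd' : (d : ℕ∞) = localDepth A (QuotSMulTop x M) :=
      ENat.add_left_injective_of_ne_top ENat.one_ne_top (by simpa using hd.trans hM)
    rw [localDepth_eq_localDepth_quotSMulTop_add_one C (algebraMap_mem_maximalIdeal hx) hregN, hM,
      ← ih (QuotSMulTop x M) hd']
    congr 1
    exact idealDepth_congr_linearEquiv (quotSMulTopTensorEquivRight x)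

variable {N} in
theorem localDepth_tensorProduct_eq_localDepth_quotSMulTop_tensorProduct_add_one {c : C}
    (hc : c ∈ maximalIdeal C) (hreg : IsSMulRegular (N ⊗[A] (A ⧸ maximalIdeal A)) c) :
    localDepth C (N ⊗[A] M) = localDepth C (QuotSMulTop c N ⊗[A] M) + 1 := by
  have := faithfullyFlat_of_isLocalHom (A := A) C N
  have := finite_tensorProduct_left (A := A) (C := C) (N := N) (M := M)
  have := Module.FaithfullyFlat.lTensor_nontrivial A N M
  rw [localDepth_eq_localDepth_quotSMulTop_add_one C hc
    (isSMulRegular_tensor_of_isSMulRegular_residue hreg)]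
  congr 1
  exact idealDepth_congr_linearEquiv (quotSMulTopTensorEquivLeft c)

theorem localDepth_tensorProduct_eq_add :
    localDepth C (N ⊗[A] M) =
      localDepth A M + localDepth C (N ⊗[A] (A ⧸ maximalIdeal A)) := by
  have := faithfullyFlat_of_isLocalHom (A := A) C N
  have := finite_tensorProduct_left (A := A) (C := C) (N := N) (M := A ⧸ maximalIdeal A)
  have := Module.FaithfullyFlat.lTensor_nontrivial A N (A ⧸ maximalIdeal A)
  obtain ⟨n, hn⟩ := ENat.ne_top_iff_exists.mp
    (localDepth_ne_top C (N ⊗[A] (A ⧸ maximalIdeal A)))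
  induction n generalizing N with
  | zero =>
    rw [← hn, localDepth_tensorProduct_of_localDepth_fiber_eq_zero N M hn.symm, Nat.cast_zero,
      add_zero]
  | succ n ih =>
    obtain ⟨c, hc, hreg⟩ := exists_isSMulRegular_of_localDepth_ne_zero C
      (by simp [← hn] : localDepth C (N ⊗[A] (A ⧸ maximalIdeal A)) ≠ 0)
    have := nontrivial_quotSMulTop hc (maximalIdeal_smul_top_ne_top C N)
    have : Module.Flat A (QuotSMulTop c N) :=
      flat_quotSMulTop_of_isSMulRegular fun I =>
        isSMulRegular_tensor_of_isSMulRegular_residue hreg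
    have := faithfullyFlat_of_isLocalHom (A := A) C (QuotSMulTop c N)
    rw [localDepth_tensorProduct_eq_localDepth_quotSMulTop_tensorProduct_add_one M hc hreg]
    rw [localDepth_tensorProduct_eq_localDepth_quotSMulTop_tensorProduct_add_one _ hc hreg] at hn ⊢
    rw [ih (QuotSMulTop c N) this finite_tensorProduct_left
      (Module.FaithfullyFlat.lTensor_nontrivial A _ _)
      (ENat.add_left_injective_of_ne_top ENat.one_ne_top (by simpa using hn)), add_assoc]

end FlatLocal

section DepthAt

open RingTheory.Sequence IsLocalRing

variable {A : Type u} [CommRing A] {M : Type v} [AddCommGroup M] [Module A M] {P : PrimeSpectrum A}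

theorem depthAt_congr_linearEquiv {M' : Type w} [AddCommGroup M'] [Module A M'] (e : M ≃ₗ[A] M') :
    depthAt A M P = depthAt A M' P :=
  idealDepth_congr_linearEquiv (IsLocalizedModule.mapEquiv P.asIdeal.primeCompl
    (LocalizedModule.mkLinearMap _ M) (LocalizedModule.mkLinearMap _ M')
    (Localization P.asIdeal.primeCompl) e)

theorem depthAt_self_eq_localDepth (P : PrimeSpectrum A) :
    depthAt A A P =
      localDepth (Localization.AtPrime P.asIdeal) (Localization.AtPrime P.asIdeal) :=
  idealDepth_congr_linearEquiv (LocalizedModule.equivTensorProduct P.asIdeal.primeCompl A ≪≫ₗ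
    AlgebraTensorModule.rid A (Localization P.asIdeal.primeCompl) _)

/-- The isomorphism `(M / a M)_S ≃ M_S / a M_S`. -/
def localizedModuleQuotSMulTopEquiv (S : Submonoid A) (a : A) (M : Type v) [AddCommGroup M]
    [Module A M] : QuotSMulTop (algebraMap A (Localization S) a) (LocalizedModule S M)
      ≃ₗ[Localization S] LocalizedModule S (QuotSMulTop a M) :=
  QuotSMulTop.congr _ (LocalizedModule.equivTensorProduct S M) ≪≫ₗ
    quotSMulTopTensorEquivRight a ≪≫ₗ (LocalizedModule.equivTensorProduct S _).symm

variable [Module.Finite A M]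

theorem idealDepth_le_depthAt (hP : P ∈ Module.support A M) :
    idealDepth A P.asIdeal M ≤ depthAt A M P := by
  have : Nontrivial (LocalizedModule P.asIdeal.primeCompl M) := Module.mem_support_iff.mp hP
  refine sSup_le ?_
  rintro _ ⟨rs, rfl, hmem, hrs⟩
  refine le_sSup ⟨rs.map (algebraMap A (Localization.AtPrime P.asIdeal)), by simp, ?_,
    hrs.toIsWeaklyRegular.isRegular_of_isLocalizedModule_of_mem _ P.asIdeal
      (LocalizedModule.mkLinearMap P.asIdeal.primeCompl M) hmem⟩
  simpa only [List.mem_map, forall_exists_index, and_imp, forall_apply_eq_imp_iff₂,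
    IsLocalization.AtPrime.to_map_mem_maximal_iff _ P.asIdeal] using hmem

variable [IsNoetherianRing A]

theorem depthAt_ne_top (hP : P ∈ Module.support A M) : depthAt A M P ≠ ⊤ :=
  have : Nontrivial (LocalizedModule P.asIdeal.primeCompl M) := Module.mem_support_iff.mp hP
  localDepth_ne_top _ _

open Module.associatedPrimes in
theorem depthAt_eq_zero_iff (hP : P ∈ Module.support A M) :
    depthAt A M P = 0 ↔ P.asIdeal ∈ associatedPrimes A M := by
  have : Nontrivial (LocalizedModule P.asIdeal.primeCompl M) := Module.mem_support_iff.mp hP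
  rw [depthAt, localDepth_eq_zero_iff,
    ← preimage_comap_associatedPrimes_eq_associatedPrimes_of_isLocalizedModule
      P.asIdeal.primeCompl (Localization.AtPrime P.asIdeal)
      (LocalizedModule.mkLinearMap P.asIdeal.primeCompl M), Set.mem_preimage,
    ← Ideal.under_def, Localization.AtPrime.under_maximalIdeal]

theorem depthAt_eq_depthAt_quotSMulTop_add_one (hP : P ∈ Module.support A M) {x : A}
    (hx : x ∈ P.asIdeal) (hreg : IsSMulRegular M x) :
    depthAt A M P = depthAt A (QuotSMulTop x M) P + 1 := by
  have : Nontrivial (LocalizedModule P.asIdeal.primeCompl M) := Module.mem_support_iff.mp hP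
  rw [depthAt, localDepth_eq_localDepth_quotSMulTop_add_one _
    ((IsLocalization.AtPrime.to_map_mem_maximal_iff _ P.asIdeal x).mpr hx)
    (hreg.of_isLocalizedModule _ P.asIdeal.primeCompl
      (LocalizedModule.mkLinearMap P.asIdeal.primeCompl M))]
  congr 1
  exact idealDepth_congr_linearEquiv (localizedModuleQuotSMulTopEquiv _ x M)

theorem depthAt_eq_depthAt_quotient_ofList_add_length (hP : P ∈ Module.support A M) {rs : List A}
    (hmem : ∀ r ∈ rs, r ∈ P.asIdeal) (hrs : IsWeaklyRegular M rs) :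
    depthAt A M P = depthAt A (M ⧸ (Ideal.ofList rs • ⊤ : Submodule A M)) P + rs.length := by
  induction rs generalizing M with
  | nil =>
    have hbot : (Ideal.ofList ([] : List A) • ⊤ : Submodule A M) = ⊥ := by simp
    simpa using (depthAt_congr_linearEquiv (Submodule.quotEquivOfEqBot _ hbot)).symm
  | cons r rs ih =>
    rw [isWeaklyRegular_cons_iff] at hrs
    rw [List.forall_mem_cons] at hmem
    have hP' : P ∈ Module.support A (QuotSMulTop r M) := by
      simpa [Module.support_quotSMulTop] using And.intro hP hmem.1
    rw [depthAt_eq_depthAt_quotSMulTop_add_one hP hmem.1 hrs.1, ih hP' hmem.2 hrs.2,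
      depthAt_congr_linearEquiv (Submodule.quotOfListConsSMulTopEquivQuotSMulTopInner M r rs)]
    simp [add_assoc]

theorem depthAt_eq_length_iff_mem_associatedPrimes (hP : P ∈ Module.support A M) {rs : List A}
    (hmem : ∀ r ∈ rs, r ∈ P.asIdeal) (hrs : IsWeaklyRegular M rs) :
    depthAt A M P = rs.length ↔
      P.asIdeal ∈ associatedPrimes A (M ⧸ (Ideal.ofList rs • ⊤ : Submodule A M)) := by
  have hP' : P ∈ Module.support A (M ⧸ (Ideal.ofList rs • ⊤ : Submodule A M)) := by
    rw [Module.support_quotient]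
    exact ⟨hP, Ideal.span_le.mpr hmem⟩
  rw [depthAt_eq_depthAt_quotient_ofList_add_length hP hmem hrs, ← depthAt_eq_zero_iff hP']
  simp

theorem exists_le_depthAt_eq_idealDepth [Small.{v} A] {I : Ideal A}
    (hI : I • (⊤ : Submodule A M) ≠ ⊤) :
    ∃ P ∈ Module.support A M, I ≤ P.asIdeal ∧ depthAt A M P = idealDepth A I M := by
  have := nontrivial_of_ideal_smul_ne_top hI
  have hI' : Nontrivial (M ⧸ (I • ⊤ : Submodule A M)) := Submodule.Quotient.nontrivial_iff.mpr hI
  obtain ⟨P, hP⟩ := (Module.nonempty_support_iff (R := A)).mpr hI'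
  rw [Module.support_quotient] at hP
  obtain ⟨n, hn⟩ := ENat.ne_top_iff_exists.mp
    (((idealDepth_mono hP.2).trans (idealDepth_le_depthAt hP.1)).trans_lt
      (depthAt_ne_top hP.1).lt_top).ne
  obtain ⟨rs, rfl, hmem, hrs⟩ := natCast_le_idealDepth_iff.mp hn.le
  have hle : Ideal.ofList rs ≤ I := Ideal.span_le.mpr hmem
  have hzero : idealDepth A I (M ⧸ (Ideal.ofList rs • ⊤ : Submodule A M)) = 0 := by
    refine ENat.add_left_injective_of_ne_top (ENat.natCast_ne_top rs.length) ?_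
    simpa [← hn] using
      (idealDepth_eq_idealDepth_quotient_ofList_add_length hI hmem hrs.toIsWeaklyRegular).symm
  obtain ⟨Q, hQ, hIQ⟩ := (idealDepth_eq_zero_iff_exists_associatedPrime
    (ideal_smul_quotient_ne_top (Submodule.smul_mono_left hle) hI)).mp hzero
  have hQM : ⟨Q, hQ.isPrime⟩ ∈ Module.support A M :=
    Module.support_subset_of_surjective (Submodule.mkQ _) (Submodule.mkQ_surjective _) <|
      Module.mem_support_iff_of_finite.mpr
        (Submodule.annihilator_top.symm.trans_le hQ.annihilator_le)
  refine ⟨⟨Q, hQ.isPrime⟩, hQM, hIQ, ?_⟩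
  rw [← hn]
  exact (depthAt_eq_length_iff_mem_associatedPrimes hQM (fun r hr => hIQ (hmem r hr))
    hrs.toIsWeaklyRegular).mpr hQ

end DepthAt



section CMDefect

open IsLocalRing

/-- The Cohen-Macaulay defect `dim A - depth A` of a noetherian local ring. Both terms are finite,
and the truncated subtraction is exact since `depth A ≤ dim A`. -/
def cmDefect (A : Type*) [CommRing A] [IsLocalRing A] : ℕ :=
  (maximalIdeal A).height.toNat - (localDepth A A).toNat

theorem localDepth_eq_of_ringEquiv {A A' : Type*} [CommRing A] [CommRing A'] [IsLocalRing A]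
    [IsLocalRing A'] (e : A ≃+* A') : localDepth A A = localDepth A' A' := by
  rw [localDepth, localDepth, ← idealDepth_comap_eq_of_surjective (e : A →+* A') e.surjective
    e.toAddEquiv (by simp)]
  congr 1
  exact ((local_hom_TFAE (e : A →+* A')).out 0 4 rfl rfl |>.mp inferInstance).symm

theorem cmDefect_eq_of_ringEquiv {A A' : Type*} [CommRing A] [CommRing A'] [IsLocalRing A]
    [IsLocalRing A'] (e : A ≃+* A') : cmDefect A = cmDefect A' := by
  have hheight : (maximalIdeal A).height = (maximalIdeal A').height := by
    have hdim := ringKrullDim_eq_of_ringEquiv e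
    rw [← maximalIdeal_height_eq_ringKrullDim, ← maximalIdeal_height_eq_ringKrullDim] at hdim
    exact_mod_cast hdim
  rw [cmDefect, cmDefect, localDepth_eq_of_ringEquiv e, hheight]

theorem height_maximalIdeal_localization {A : Type*} [CommRing A] (P : Ideal A) [P.IsPrime] :
    (maximalIdeal (Localization.AtPrime P)).height = P.height := by
  have hdim := IsLocalization.AtPrime.ringKrullDim_eq_height P (Localization.AtPrime P)
  rw [← maximalIdeal_height_eq_ringKrullDim] at hdim
  exact_mod_cast hdim

variable (A : Type*) [CommRing A] [IsLocalRing A] [IsNoetherianRing A]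

theorem localDepth_le_height_maximalIdeal : localDepth A A ≤ (maximalIdeal A).height := by
  have hle := localDepth_le_supportDim A A
  rw [Module.supportDim_self_eq_ringKrullDim, ← maximalIdeal_height_eq_ringKrullDim] at hle
  exact_mod_cast hle

theorem height_maximalIdeal_eq_localDepth_add_cmDefect :
    (maximalIdeal A).height = localDepth A A + cmDefect A := by
  have hle := localDepth_le_height_maximalIdeal A
  have hheight : (maximalIdeal A).height ≠ ⊤ :=
    Ideal.height_ne_top (maximalIdeal.isMaximal A).ne_top
  rw [cmDefect, ENat.natCast_sub, ENat.natCast_toNat hheight,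
    ENat.natCast_toNat (localDepth_ne_top A A), add_tsub_cancel_of_le hle]

theorem cmDefect_le_iff (n : ℕ) :
    cmDefect A ≤ n ↔ (maximalIdeal A).height ≤ localDepth A A + n := by
  rw [height_maximalIdeal_eq_localDepth_add_cmDefect,
    ENat.add_le_add_iff_left (localDepth_ne_top A A), Nat.cast_le]

theorem cmDefect_eq_zero_iff : cmDefect A = 0 ↔ IsLocalCMRing A := by
  rw [← Nat.le_zero, cmDefect_le_iff, IsLocalCMRing, ← maximalIdeal_height_eq_ringKrullDim,
    WithBot.coe_inj, Nat.cast_zero, add_zero]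
  exact ⟨(localDepth_le_height_maximalIdeal A).antisymm, fun h => h.ge⟩

end CMDefect

section Kang

open RingTheory.Sequence IsLocalRing

variable {A : Type u} [CommRing A]

theorem mem_support_self (P : PrimeSpectrum A) : P ∈ Module.support A A := by
  rw [Module.mem_support_iff_of_finite, Module.annihilator_eq_bot.mpr inferInstance]
  exact bot_le

theorem isAlmostCMRing_iff :
    IsAlmostCMRing A ↔ ∀ P : PrimeSpectrum A, idealDepth A P.asIdeal A = depthAt A A P :=
  forall_congr' fun P => forall_prop_of_true (mem_support_self P)

theorem exists_mem_notMem_of_lt {S : Set (Ideal A)} (hS : S.Finite)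
    (hprime : ∀ Q ∈ S, Q.IsPrime) (P : Ideal A) : ∃ y ∈ P, ∀ Q ∈ S, Q < P → y ∉ Q := by
  by_contra! hcover
  obtain ⟨Q, hQ, hle⟩ := (Ideal.subset_union_prime_finite (hS.subset (Set.sep_subset S (· < P)))
    (f := id) ⊥ ⊥ fun Q hQ _ _ => hprime Q hQ.1).mp fun y hy =>
      let ⟨Q, hQ, hlt, hyQ⟩ := hcover y hy
      Set.mem_biUnion (Set.mem_sep hQ hlt) hyQ
  exact hle.not_gt hQ.2

variable [IsNoetherianRing A]

theorem cmDefect_localization_le_one_iff (P : PrimeSpectrum A) :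
    cmDefect (Localization.AtPrime P.asIdeal) ≤ 1 ↔ P.asIdeal.height ≤ depthAt A A P + 1 := by
  rw [cmDefect_le_iff, height_maximalIdeal_localization, depthAt_self_eq_localDepth, Nat.cast_one]

theorem depthAt_le_height (P : PrimeSpectrum A) : depthAt A A P ≤ P.asIdeal.height := by
  rw [depthAt_self_eq_localDepth, ← height_maximalIdeal_localization]
  exact localDepth_le_height_maximalIdeal _

open scoped Classical in
theorem height_le_length_add_one {S : Set (Ideal A)} (hS : S.Finite)
    (hprime : ∀ Q ∈ S, Q.IsPrime) {P : Ideal A} [P.IsPrime] {rs : List A} (hmem : ∀ r ∈ rs, r ∈ P)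
    (h : ∀ Q : Ideal A, Q.IsPrime → (∀ r ∈ rs, r ∈ Q) → Q < P → Q ∈ S) :
    P.height ≤ rs.length + 1 := by
  obtain ⟨y, hyP, hy⟩ := exists_mem_notMem_of_lt hS hprime P
  have hspan (Q : Ideal A) :
      Ideal.span ((y :: rs).toFinset : Set A) ≤ Q ↔ y ∈ Q ∧ ∀ r ∈ rs, r ∈ Q := by
    simp [Ideal.span_le, Set.subset_def]
  have hmin : P ∈ (Ideal.span ((y :: rs).toFinset : Set A)).minimalPrimes := by
    refine ⟨⟨inferInstance, (hspan P).mpr ⟨hyP, hmem⟩⟩, fun Q ⟨hQ, hle⟩ hQP => ?_⟩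
    obtain ⟨hyQ, hrsQ⟩ := (hspan Q).mp hle
    rcases hQP.eq_or_lt with rfl | hlt
    · exact le_rfl
    · exact absurd hyQ (hy Q (h Q hQ hrsQ hlt) hlt)
  refine (Ideal.height_le_card_of_mem_minimalPrimes_span_finset hmin).trans ?_
  exact_mod_cast List.toFinset_card_le (y :: rs)

/-- A prime `Q < P` containing a maximal regular sequence of `P` has the same depth as `P`, so it
belongs to the finite set of associated primes of the quotient by that sequence. -/
theorem height_le_depthAt_add_one_of_isAlmostCMRing (h : IsAlmostCMRing A) (P : PrimeSpectrum A) :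
    P.asIdeal.height ≤ depthAt A A P + 1 := by
  rw [isAlmostCMRing_iff] at h
  have : Nontrivial A := Module.nonempty_support_iff.mp ⟨P, mem_support_self P⟩
  obtain ⟨n, hn⟩ := ENat.ne_top_iff_exists.mp (depthAt_ne_top (mem_support_self P))
  obtain ⟨rs, rfl, hmem, hrs⟩ := natCast_le_idealDepth_iff.mp (hn.le.trans (h P).ge)
  rw [← hn]
  refine height_le_length_add_one (associatedPrimes.finite A
    (A ⧸ (Ideal.ofList rs • ⊤ : Submodule A A))) (fun Q hQ => hQ.isPrime) hmem
    fun Q hQ hrsQ hlt => ?_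
  refine (depthAt_eq_length_iff_mem_associatedPrimes (P := ⟨Q, hQ⟩) (mem_support_self _) hrsQ
    hrs.toIsWeaklyRegular).mp (le_antisymm ?_ ?_)
  · rw [hn, ← h, ← h]
    exact idealDepth_mono hlt.le
  · rw [depthAt_eq_depthAt_quotient_ofList_add_length (mem_support_self _) hrsQ
      hrs.toIsWeaklyRegular]
    exact le_add_self

theorem isAlmostCMRing_of_height_le_depthAt_add_one
    (h : ∀ P : PrimeSpectrum A, P.asIdeal.height ≤ depthAt A A P + 1) : IsAlmostCMRing A := by
  intro P hP
  refine (idealDepth_le_depthAt hP).antisymm ?_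
  obtain ⟨Q, -, hPQ, hQ⟩ := exists_le_depthAt_eq_idealDepth (I := P.asIdeal) (M := A)
    (by simpa using P.isPrime.ne_top)
  obtain rfl | hlt := (show P ≤ Q from hPQ).eq_or_lt
  · exact hQ.le
  rw [← hQ, ← ENat.add_le_add_iff_right ENat.one_ne_top]
  calc depthAt A A P + 1 ≤ P.asIdeal.height + 1 := by gcongr; exact depthAt_le_height P
    _ ≤ Q.asIdeal.height := Ideal.height_add_one_le_of_lt_of_isPrime hlt
    _ ≤ depthAt A A Q + 1 := h Q

theorem isAlmostCMRing_iff_cmDefect_le_one :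
    IsAlmostCMRing A ↔ ∀ P : PrimeSpectrum A, cmDefect (Localization.AtPrime P.asIdeal) ≤ 1 := by
  simp only [cmDefect_localization_le_one_iff]
  exact ⟨height_le_depthAt_add_one_of_isAlmostCMRing, isAlmostCMRing_of_height_le_depthAt_add_one⟩

end Kang

section Principal

open IsLocalRing

variable {A : Type*} [CommRing A] [IsLocalRing A] [IsNoetherianRing A] {t : A}

theorem eq_bot_of_notMem_of_maximalIdeal_eq_span_singleton (ht : maximalIdeal A = Ideal.span {t})
    {P : Ideal A} [hP : P.IsPrime] (htP : t ∉ P) : P = ⊥ := by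
  refine Submodule.eq_bot_of_le_smul_of_le_jacobson_bot (maximalIdeal A) P
    (IsNoetherian.noetherian P) (fun x hx => ?_) (maximalIdeal_le_jacobson ⊥)
  obtain ⟨y, rfl⟩ := Ideal.mem_span_singleton.mp (ht ▸ le_maximalIdeal_of_isPrime P hx)
  exact Submodule.smul_mem_smul (ht ▸ Ideal.mem_span_singleton_self t)
    ((hP.mem_or_mem hx).resolve_left htP)

theorem cmDefect_eq_zero_of_maximalIdeal_eq_span_singleton
    (ht : maximalIdeal A = Ideal.span {t}) : cmDefect A = 0 := by
  rw [← Nat.le_zero, cmDefect_le_iff, Nat.cast_zero, add_zero]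
  by_cases hdepth : localDepth A A = 0
  · obtain ⟨-, z, hz⟩ := isAssociatedPrime_iff.mp ((localDepth_eq_zero_iff A A).mp hdepth)
    have htz : t * z = 0 := by
      simpa [Submodule.mem_colon_singleton] using hz.le (ht ▸ Ideal.mem_span_singleton_self t)
    suffices maximalIdeal A ∈ minimalPrimes A from
      (Ideal.height_eq_zero_iff.mpr this).le.trans hdepth.ge
    refine ⟨⟨inferInstance, bot_le⟩, fun P ⟨hP, _⟩ _ => ?_⟩
    rw [ht, Ideal.span_singleton_le_iff_mem]
    by_contra htP
    have hzP := (hP.mem_or_mem (htz ▸ P.zero_mem)).resolve_left htP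
    rw [eq_bot_of_notMem_of_maximalIdeal_eq_span_singleton ht htP, Ideal.mem_bot] at hzP
    exact (maximalIdeal.isMaximal A).ne_top (by simp [hz, hzP])
  · have : (maximalIdeal A).IsPrincipal := ⟨⟨t, ht⟩⟩
    calc (maximalIdeal A).height ≤ 1 := by
          refine Ideal.height_le_one_of_isPrincipal_of_mem_minimalPrimes (maximalIdeal A) _ ?_
          rw [Ideal.minimalPrimes_eq_subsingleton_self]
          rfl
      _ ≤ localDepth A A := Order.one_le_iff_pos.mpr (pos_iff_ne_zero.mpr hdepth)

theorem cmDefect_eq_zero_of_isField {A : Type*} [CommRing A] [IsLocalRing A] (h : IsField A) :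
    cmDefect A = 0 := by
  let := h.toField
  have : IsNoetherianRing A := inferInstance
  exact cmDefect_eq_zero_of_maximalIdeal_eq_span_singleton (t := 0)
    ((isField_iff_maximalIdeal_eq.mp h).trans Ideal.span_singleton_zero.symm)

theorem cmDefect_localization_eq_zero {F : Type*} [CommRing F] [IsPrincipalIdealRing F]
    (q : Ideal F) [q.IsPrime] : cmDefect (Localization.AtPrime q) = 0 := by
  have : IsNoetherianRing (Localization.AtPrime q) :=
    IsLocalization.isNoetherianRing q.primeCompl _ inferInstance
  refine cmDefect_eq_zero_of_maximalIdeal_eq_span_singleton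
    (t := algebraMap F _ (Submodule.IsPrincipal.generator q)) ?_
  rw [← Localization.AtPrime.map_eq_maximalIdeal, ← Set.image_singleton, ← Ideal.map_span,
    Ideal.span_singleton_generator]

end Principal

section CMDefectFlat

open IsLocalRing

variable (A : Type u) (C : Type v) [CommRing A] [CommRing C] [Algebra A C]

theorem isNoetherianRing_of_faithfullyFlat [Module.FaithfullyFlat A C] [IsNoetherianRing C] :
    IsNoetherianRing A :=
  Submodule.IsNoetherian.of_isNoetherian_tensorProduct_of_faithfullyFlat (A := C)
    (isNoetherian_of_linearEquiv (AlgebraTensorModule.rid A C C).symm)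

variable [IsLocalRing A] [IsLocalRing C] [IsLocalHom (algebraMap A C)]
  [IsLocalRing (C ⧸ (maximalIdeal A).map (algebraMap A C))]

theorem comap_mk_maximalIdeal_quotient {I : Ideal C} [IsLocalRing (C ⧸ I)] :
    (maximalIdeal (C ⧸ I)).comap (Ideal.Quotient.mk I) = maximalIdeal C :=
  eq_maximalIdeal (Ideal.comap_isMaximal_of_surjective _ Ideal.Quotient.mk_surjective)

variable [IsNoetherianRing A] [IsNoetherianRing C] [Module.Flat A C]

theorem localDepth_eq_add_of_flat : localDepth C C = localDepth A A +
    localDepth (C ⧸ (maximalIdeal A).map (algebraMap A C))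
      (C ⧸ (maximalIdeal A).map (algebraMap A C)) := by
  set I := (maximalIdeal A).map (algebraMap A C)
  calc localDepth C C = localDepth C (C ⊗[A] A) :=
        (idealDepth_congr_linearEquiv (AlgebraTensorModule.rid A C C)).symm
    _ = localDepth A A + localDepth C (C ⊗[A] (A ⧸ maximalIdeal A)) :=
        localDepth_tensorProduct_eq_add C A
    _ = localDepth A A + localDepth C (C ⧸ I) := by
        congr 1
        exact (idealDepth_congr_linearEquiv (Algebra.TensorProduct.quotIdealMapEquivTensorQuot C
          (maximalIdeal A)).toLinearEquiv).symm
    _ = localDepth A A + localDepth (C ⧸ I) (C ⧸ I) := by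
        rw [localDepth, localDepth, localDepth, ← comap_mk_maximalIdeal_quotient (I := I)]
        congr 1
        exact idealDepth_comap_eq_of_surjective _ Ideal.Quotient.mk_surjective (AddEquiv.refl _)
          (fun _ _ => rfl) _

theorem height_maximalIdeal_eq_add_of_flat : (maximalIdeal C).height = (maximalIdeal A).height +
    (maximalIdeal (C ⧸ (maximalIdeal A).map (algebraMap A C))).height := by
  have := Algebra.HasGoingDown.of_flat (R := A) (S := C)
  have : (maximalIdeal C).LiesOver (maximalIdeal A) :=
    ⟨(((local_hom_TFAE (algebraMap A C)).out 0 4 rfl rfl).mp inferInstance).symm⟩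
  rw [Ideal.height_eq_height_add_of_liesOver_of_hasGoingDown (maximalIdeal A) (maximalIdeal C),
    ← comap_mk_maximalIdeal_quotient C (I := (maximalIdeal A).map (algebraMap A C)),
    Ideal.map_comap_of_surjective _ Ideal.Quotient.mk_surjective]

theorem cmDefect_eq_add_of_flat :
    cmDefect C = cmDefect A + cmDefect (C ⧸ (maximalIdeal A).map (algebraMap A C)) := by
  have hheight := height_maximalIdeal_eq_add_of_flat A C
  simp only [height_maximalIdeal_eq_localDepth_add_cmDefect, localDepth_eq_add_of_flat A C]
    at hheight
  obtain ⟨a, ha⟩ := ENat.ne_top_iff_exists.mp (localDepth_ne_top A A)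
  obtain ⟨b, hb⟩ := ENat.ne_top_iff_exists.mp (localDepth_ne_top
    (C ⧸ (maximalIdeal A).map (algebraMap A C)) (C ⧸ (maximalIdeal A).map (algebraMap A C)))
  rw [← ha, ← hb] at hheight
  norm_cast at hheight
  lia

end CMDefectFlat

section Fiber

open IsLocalRing

attribute [local instance] Algebra.TensorProduct.rightAlgebra

variable {A : Type u} {T : Type v} [CommRing A] [CommRing T] [Algebra A T]
  (p : Ideal A) [p.IsPrime] (Q : Ideal T) [Q.IsPrime]

theorem map_maximalIdeal_localization_eq_map [Algebra (Localization.AtPrime p)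
    (Localization.AtPrime Q)] [IsScalarTower A (Localization.AtPrime p) (Localization.AtPrime Q)] :
    (maximalIdeal (Localization.AtPrime p)).map (algebraMap _ (Localization.AtPrime Q)) =
      p.map (algebraMap A (Localization.AtPrime Q)) := by
  rw [← Localization.AtPrime.map_eq_maximalIdeal, Ideal.map_map, ← IsScalarTower.algebraMap_eq]

section LiesOver

variable [Q.LiesOver p]

theorem isLocalHom_algebraMap_localization [Algebra (Localization.AtPrime p)
    (Localization.AtPrime Q)] [Localization.AtPrime.IsLiesOverAlgebra p Q] :
    IsLocalHom (algebraMap (Localization.AtPrime p) (Localization.AtPrime Q)) := by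
  rw [Localization.AtPrime.IsLiesOverAlgebra.algebraMap_eq]
  infer_instance

theorem exists_fiber_liesOver : ∃ (q : Ideal (p.Fiber T)) (_ : q.IsPrime), q.LiesOver Q := by
  let q := PrimeSpectrum.primesOverOrderIsoFiber A T p (Ideal.primesOver.mk p Q)
  refine ⟨q.asIdeal, q.isPrime, ⟨?_⟩⟩
  change Q = q.asIdeal.comap Algebra.TensorProduct.includeRight
  rw [← PrimeSpectrum.coe_primesOverOrderIsoFiber_symm_apply, OrderIso.symm_apply_apply]

end LiesOver

variable [Module.Flat A T] [IsNoetherianRing (Localization.AtPrime Q)]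

theorem isNoetherianRing_localization_of_liesOver [Q.LiesOver p] :
    IsNoetherianRing (Localization.AtPrime p) := by
  let := Localization.AtPrime.algebraOfLiesOver p Q
  have := isLocalHom_algebraMap_localization p Q
  have : Module.FaithfullyFlat (Localization.AtPrime p) (Localization.AtPrime Q) :=
    .of_flat_of_isLocalHom
  exact isNoetherianRing_of_faithfullyFlat _ (Localization.AtPrime Q)

section LocalizationFiber

variable (q : Ideal (p.Fiber T)) [q.IsPrime] [q.LiesOver Q]

include Q in
omit [Module.Flat A T] in
theorem isNoetherianRing_localization_fiber : IsNoetherianRing (Localization.AtPrime q) := by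
  obtain rfl : Q = q.comap Algebra.TensorProduct.includeRight := Ideal.LiesOver.over
  let := Localization.AtPrime.algebraOfLiesOver p (q.comap Algebra.TensorProduct.includeRight)
  exact isNoetherianRing_of_ringEquiv _
    (Ideal.Fiber.localizationAlgEquivQuotient p q).symm.toRingEquiv

theorem cmDefect_localization_eq_add_fiber : cmDefect (Localization.AtPrime Q) =
    cmDefect (Localization.AtPrime p) + cmDefect (Localization.AtPrime q) := by
  obtain rfl : Q = q.comap Algebra.TensorProduct.includeRight := Ideal.LiesOver.over
  let Q := q.comap Algebra.TensorProduct.includeRight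
  let := Localization.AtPrime.algebraOfLiesOver p Q
  have := isLocalHom_algebraMap_localization p Q
  have := isNoetherianRing_localization_of_liesOver p Q
  let e : Localization.AtPrime q ≃+* Localization.AtPrime Q ⧸
      (maximalIdeal (Localization.AtPrime p)).map (algebraMap _ (Localization.AtPrime Q)) :=
    (Ideal.Fiber.localizationAlgEquivQuotient p q).toRingEquiv.trans
      (Ideal.quotEquivOfEq (map_maximalIdeal_localization_eq_map p Q).symm)
  have := e.isLocalRing
  rw [cmDefect_eq_of_ringEquiv (A := Localization.AtPrime q) e]
  exact cmDefect_eq_add_of_flat _ _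

end LocalizationFiber

variable [Q.LiesOver p]

theorem cmDefect_localization_le_of_liesOver :
    cmDefect (Localization.AtPrime p) ≤ cmDefect (Localization.AtPrime Q) := by
  obtain ⟨q, _, _⟩ := exists_fiber_liesOver p Q
  exact (cmDefect_localization_eq_add_fiber p Q q).ge.trans' (Nat.le_add_right _ _)

theorem cmDefect_localization_eq_of_map_eq
    (h : p.map (algebraMap A (Localization.AtPrime Q)) = maximalIdeal (Localization.AtPrime Q)) :
    cmDefect (Localization.AtPrime Q) = cmDefect (Localization.AtPrime p) := by
  let := Localization.AtPrime.algebraOfLiesOver p Q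
  have := isLocalHom_algebraMap_localization p Q
  have := isNoetherianRing_localization_of_liesOver p Q
  have hfield : IsField (Localization.AtPrime Q ⧸ (maximalIdeal (Localization.AtPrime p)).map
      (algebraMap (Localization.AtPrime p) (Localization.AtPrime Q))) := by
    rw [map_maximalIdeal_localization_eq_map, h]
    exact (Ideal.Quotient.maximal_ideal_iff_isField_quotient _).mp inferInstance
  have := hfield.nontrivial
  have := IsLocalRing.of_surjective' _ (Ideal.Quotient.mk_surjective
    (I := (maximalIdeal (Localization.AtPrime p)).map (algebraMap _ (Localization.AtPrime Q))))
  rw [cmDefect_eq_add_of_flat (Localization.AtPrime p) (Localization.AtPrime Q),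
    cmDefect_eq_zero_of_isField hfield, add_zero]

end Fiber

section RingEquiv

variable {F F' : Type*} [CommRing F] [CommRing F'] (e : F ≃+* F') {p : Ideal F} [p.IsPrime]
  {q : Ideal F'} [q.IsPrime]

theorem cmDefect_localization_eq_of_ringEquiv (h : p = q.comap (e : F →+* F')) :
    cmDefect (Localization.AtPrime p) = cmDefect (Localization.AtPrime q) :=
  cmDefect_eq_of_ringEquiv (Localization.localRingEquiv p q e h)

theorem isNoetherianRing_localization_of_ringEquiv [IsNoetherianRing (Localization.AtPrime q)]
    (h : p = q.comap (e : F →+* F')) : IsNoetherianRing (Localization.AtPrime p) :=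
  isNoetherianRing_of_ringEquiv _ (Localization.localRingEquiv p q e h).symm

end RingEquiv

section SimpleExtension

open IntermediateField Polynomial

open scoped IntermediateField.algebraAdjoinAdjoin

theorem isPrincipalIdealRing_of_isLocalization {S S' : Type*} [CommRing S] [CommRing S']
    [Algebra S S'] [IsPrincipalIdealRing S] (M : Submonoid S) [IsLocalization M S'] :
    IsPrincipalIdealRing S' :=
  ⟨fun I => IsLocalization.map_under M S' I ▸
    (IsPrincipalIdealRing.principal (I.under S)).map_ringHom _⟩

theorem isPrincipalIdealRing_tensorProduct_of_isLocalization {E S S' κ : Type*} [CommRing E]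
    [CommRing S] [CommRing S'] [CommRing κ] [Algebra E S] [Algebra E S'] [Algebra S S']
    [IsScalarTower E S S'] [Algebra E κ] [IsPrincipalIdealRing (S ⊗[E] κ)] (M : Submonoid S)
    [IsLocalization M S'] : IsPrincipalIdealRing (S' ⊗[E] κ) := by
  let := (Algebra.TensorProduct.map (IsScalarTower.toAlgHom E S S') (AlgHom.id E κ)).toAlgebra
  have : IsScalarTower S (S ⊗[E] κ) (S' ⊗[E] κ) :=
    .of_algebraMap_eq fun y => by simp [RingHom.algebraMap_toAlgebra]
  have := IsLocalization.tensorProduct_tensorProduct E κ M S'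
    (by ext; simp [RingHom.algebraMap_toAlgebra])
  exact isPrincipalIdealRing_of_isLocalization (Algebra.algebraMapSubmonoid (S ⊗[E] κ) M)

theorem isPrincipalIdealRing_algebraAdjoin_tensorProduct {E K : Type*} [CommRing E] [CommRing K]
    [Algebra E K] (x : K) (κ : Type*) [Field κ] [Algebra E κ] :
    IsPrincipalIdealRing (Algebra.adjoin E {x} ⊗[E] κ) := by
  let f : E[X] →ₐ[E] Algebra.adjoin E {x} := aeval ⟨x, Algebra.self_mem_adjoin_singleton E x⟩
  have hf : Function.Surjective f := by
    rintro ⟨y, hy⟩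
    obtain ⟨g, rfl⟩ := (Algebra.adjoin_singleton_eq_range_aeval E x).le hy
    exact ⟨g, Subtype.ext (aeval_algebraMap_apply _ (_ : Algebra.adjoin E {x}) g).symm⟩
  let φ : κ[X] →ₐ[E] Algebra.adjoin E {x} ⊗[E] κ :=
    (Algebra.TensorProduct.map f (AlgHom.id E κ)).comp
      ((polyEquivTensor E κ).trans (Algebra.TensorProduct.comm E κ E[X])).toAlgHom
  exact .of_surjective φ ((TensorProduct.map_surjective hf Function.surjective_id).comp
    (AlgEquiv.surjective _))

variable {E K : Type*} [Field E] [Field K] [Algebra E K] (x : K)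

theorem isPrincipalIdealRing_adjoin_tensorProduct (κ : Type*) [Field κ] [Algebra E κ] :
    IsPrincipalIdealRing (E⟮x⟯ ⊗[E] κ) := by
  have := isPrincipalIdealRing_algebraAdjoin_tensorProduct x κ (E := E)
  exact isPrincipalIdealRing_tensorProduct_of_isLocalization
    (nonZeroDivisors (Algebra.adjoin E {x}))

variable {T T' : Type*} [CommRing T] [CommRing T'] [Algebra E T] [Algebra E⟮x⟯ T'] [Algebra E T']
  [Algebra T T'] [IsScalarTower E T T'] [IsScalarTower E E⟮x⟯ T']

theorem cmDefect_localization_eq_of_isPushout_adjoin [Algebra.IsPushout E E⟮x⟯ T T'] (p : Ideal T)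
    [p.IsPrime] (Q : Ideal T') [Q.IsPrime] [Q.LiesOver p]
    [IsNoetherianRing (Localization.AtPrime Q)] :
    cmDefect (Localization.AtPrime Q) = cmDefect (Localization.AtPrime p) := by
  have : Algebra.IsPushout E T E⟮x⟯ T' := .symm inferInstance
  have : Module.Flat T T' := .isBaseChange E T E⟮x⟯ T' this.out
  obtain ⟨q, _, _⟩ := exists_fiber_liesOver p Q
  have := isPrincipalIdealRing_adjoin_tensorProduct x p.ResidueField (E := E)
  have : IsPrincipalIdealRing (p.Fiber T') := .of_surjective
    ((Algebra.IsPushout.cancelBaseChangeAlg E E⟮x⟯ T T' p.ResidueField).symm.toRingEquiv.trans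
      (Algebra.TensorProduct.comm T T' p.ResidueField).toRingEquiv) (RingEquiv.surjective _)
  rw [cmDefect_localization_eq_add_fiber p Q q, cmDefect_localization_eq_zero q, add_zero]

end SimpleExtension

section FieldExtension

open IntermediateField IsLocalRing

attribute [local instance] Algebra.TensorProduct.rightAlgebra

/-- The module structure underlying the algebra structure of an intermediate field. It is a local
instance because `IntermediateField.module'`, which is found otherwise, blocks the unification of
instances on `F ⊗[k] D`. -/
abbrev intermediateFieldModule {k K : Type*} [Field k] [Field K] [Algebra k K]
    (F : IntermediateField k K) : Module k F :=
  Algebra.toModule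

attribute [local instance] intermediateFieldModule

section Map

variable (k E E' D : Type*) [CommRing k] [CommRing E] [CommRing E'] [CommRing D] [Algebra k E]
  [Algebra k E'] [Algebra E E'] [IsScalarTower k E E'] [Algebra k D]

/-- The algebra structure on `E' ⊗[k] D` over `E ⊗[k] D` given by extending scalars along `E → E'`.
It is a local instance because for `E = E'` it is not definitionally `Algebra.id`. -/
abbrev tensorMapAlgebra : Algebra (E ⊗[k] D) (E' ⊗[k] D) :=
  (Algebra.TensorProduct.map (IsScalarTower.toAlgHom k E E') (AlgHom.id k D)).toAlgebra

attribute [local instance] tensorMapAlgebra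

theorem isScalarTower_left_tensorMapAlgebra : IsScalarTower E (E ⊗[k] D) (E' ⊗[k] D) :=
  .of_algebraMap_eq fun x => by
    simp [RingHom.algebraMap_toAlgebra, IsScalarTower.algebraMap_apply E E' (E' ⊗[k] D)]

theorem isScalarTower_right_tensorMapAlgebra : IsScalarTower D (E ⊗[k] D) (E' ⊗[k] D) :=
  .of_algebraMap_eq fun x => by simp [RingHom.algebraMap_toAlgebra]

theorem isScalarTower_tensorMapAlgebra (E'' : Type*) [CommRing E''] [Algebra k E''] [Algebra E' E'']
    [IsScalarTower k E' E''] [Algebra E E''] [IsScalarTower k E E''] [IsScalarTower E E' E''] :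
    IsScalarTower (E ⊗[k] D) (E' ⊗[k] D) (E'' ⊗[k] D) :=
  .of_algebraMap_eq' <| by
    ext <;> simp [RingHom.algebraMap_toAlgebra, ← IsScalarTower.algebraMap_apply]

attribute [local instance] isScalarTower_left_tensorMapAlgebra

theorem isPushout_tensorMapAlgebra : Algebra.IsPushout E E' (E ⊗[k] D) (E' ⊗[k] D) :=
  Algebra.IsPushout.tensorProduct_tensorProduct k D E E'
    (by ext; simp [RingHom.algebraMap_toAlgebra])

theorem flat_tensorMapAlgebra [Module.Flat E E'] : Module.Flat (E ⊗[k] D) (E' ⊗[k] D) := by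
  have : Algebra.IsPushout E (E ⊗[k] D) E' (E' ⊗[k] D) := (isPushout_tensorMapAlgebra k E E' D).symm
  exact .isBaseChange E (E ⊗[k] D) E' (E' ⊗[k] D) this.out

end Map

attribute [local instance] tensorMapAlgebra isScalarTower_left_tensorMapAlgebra
  isScalarTower_right_tensorMapAlgebra isScalarTower_tensorMapAlgebra flat_tensorMapAlgebra

theorem exists_finset_image_eq_maximalIdeal {T : Type*} [CommRing T] (Q : Ideal T) [Q.IsPrime]
    [IsNoetherianRing (Localization.AtPrime Q)] : ∃ s : Finset T, (s : Set T) ⊆ Q ∧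
      Ideal.span (algebraMap T (Localization.AtPrime Q) '' s) = maximalIdeal _ := by
  classical
  have hQ := Localization.AtPrime.map_eq_maximalIdeal (I := Q)
  obtain ⟨s', hs', h⟩ := (Submodule.fg_span_iff_fg_span_finset_subset
    (algebraMap T (Localization.AtPrime Q) '' Q)).mp (IsNoetherian.noetherian (Ideal.span _))
  obtain ⟨s, hsQ, rfl⟩ := Finset.subset_set_image_iff.mp hs'
  rw [Finset.coe_image] at h
  exact ⟨s, hsQ, h.symm.trans hQ⟩

variable {k K D : Type*} [Field k] [Field K] [CommRing D] [Algebra k K] [Algebra k D]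

theorem exists_finset_forall_mem_range (t : K ⊗[k] D) :
    ∃ S : Finset K, ∀ F : IntermediateField k K, (S : Set K) ⊆ F →
      t ∈ Set.range (algebraMap (F ⊗[k] D) (K ⊗[k] D)) := by
  classical
  induction t with
  | zero => exact ⟨∅, fun F _ => ⟨0, map_zero _⟩⟩
  | tmul x y => exact ⟨{x}, fun F hF => ⟨(⟨x, hF (by simp)⟩ : F) ⊗ₜ y, rfl⟩⟩
  | add x y hx hy =>
    obtain ⟨S, hS⟩ := hx
    obtain ⟨S', hS'⟩ := hy
    refine ⟨S ∪ S', fun F hF => ?_⟩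
    rw [Finset.coe_union, Set.union_subset_iff] at hF
    obtain ⟨z, hz⟩ := hS F hF.1
    obtain ⟨z', hz'⟩ := hS' F hF.2
    exact ⟨z + z', by rw [map_add, hz, hz']⟩

variable (Q : Ideal (K ⊗[k] D)) [Q.IsPrime] [IsNoetherianRing (Localization.AtPrime Q)]

theorem exists_finset_map_under_eq_maximalIdeal :
    ∃ S : Finset K, (Q.under (adjoin k (S : Set K) ⊗[k] D)).map
      (algebraMap (adjoin k (S : Set K) ⊗[k] D) (Localization.AtPrime Q)) = maximalIdeal _ := by
  classical
  obtain ⟨s, hsQ, hs⟩ := exists_finset_image_eq_maximalIdeal Q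
  choose S hS using exists_finset_forall_mem_range (k := k) (K := K) (D := D)
  refine ⟨s.biUnion S, le_antisymm ?_ ?_⟩
  · rw [IsScalarTower.algebraMap_eq _ (K ⊗[k] D), ← Ideal.map_map,
      ← Localization.AtPrime.map_eq_maximalIdeal]
    exact Ideal.map_mono Ideal.map_comap_le
  · rw [← hs, Ideal.span_le]
    rintro _ ⟨t, ht, rfl⟩
    obtain ⟨y, rfl⟩ := hS t (adjoin k ((s.biUnion S : Finset K) : Set K)) (by
      refine subset_trans ?_ (subset_adjoin k _)
      exact_mod_cast Finset.subset_biUnion_of_mem S ht)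
    rw [← IsScalarTower.algebraMap_apply]
    exact Ideal.mem_map_of_mem _ (hsQ ht)

theorem cmDefect_localization_eq_of_tensorProduct_adjoin_simple {E : Type*} [Field E] [Algebra k E]
    [Algebra E K] [IsScalarTower k E K] (x : K) (p : Ideal (E ⊗[k] D)) [p.IsPrime]
    (Q : Ideal (E⟮x⟯ ⊗[k] D)) [Q.IsPrime] [Q.LiesOver p]
    [IsNoetherianRing (Localization.AtPrime Q)] :
    cmDefect (Localization.AtPrime Q) = cmDefect (Localization.AtPrime p) := by
  have := isPushout_tensorMapAlgebra k E E⟮x⟯ D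
  exact cmDefect_localization_eq_of_isPushout_adjoin (E := E) x p Q

theorem cmDefect_localization_eq_of_tensorProduct_of_bijective {k E D : Type*} [CommRing k]
    [CommRing E] [CommRing D] [Algebra k E] [Algebra k D]
    (h : Function.Bijective (algebraMap k E)) (p : Ideal D) [p.IsPrime] (Q : Ideal (E ⊗[k] D))
    [Q.IsPrime] [Q.LiesOver p] :
    cmDefect (Localization.AtPrime Q) = cmDefect (Localization.AtPrime p) := by
  let e : D ≃+* E ⊗[k] D := ((Algebra.TensorProduct.lid k D).symm.trans
    (Algebra.TensorProduct.congr (.ofBijective (Algebra.ofId k E) h) .refl)).toRingEquiv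
  have he : algebraMap D (E ⊗[k] D) = e := by
    ext
    simp [e, RingHom.algebraMap_toAlgebra]
  have hp : p = Q.comap (e : D →+* E ⊗[k] D) := he ▸ Ideal.LiesOver.over
  exact (cmDefect_localization_eq_of_ringEquiv e hp).symm

theorem cmDefect_localization_eq_of_tensorProduct_field (p : Ideal D) [p.IsPrime] [Q.LiesOver p] :
    cmDefect (Localization.AtPrime Q) = cmDefect (Localization.AtPrime p) := by
  obtain ⟨S, hS⟩ := exists_finset_map_under_eq_maximalIdeal Q
  rw [cmDefect_localization_eq_of_map_eq (Q.under (adjoin k (S : Set K) ⊗[k] D)) Q hS]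
  refine IntermediateField.induction_on_adjoin_finset S (fun F => cmDefect
    (Localization.AtPrime (Q.under (F ⊗[k] D))) = cmDefect (Localization.AtPrime p))
    ?_ fun F x _ hF => ?_
  · have : (Q.under ((⊥ : IntermediateField k K) ⊗[k] D)).LiesOver p := inferInstance
    exact cmDefect_localization_eq_of_tensorProduct_of_bijective (botEquiv k K).symm.bijective p _
  · have : IsScalarTower k F⟮x⟯ K := .of_algebraMap_eq fun _ => rfl
    have := isNoetherianRing_localization_of_liesOver (Q.under (F⟮x⟯ ⊗[k] D)) Q
    have : (Q.under (F⟮x⟯ ⊗[k] D)).LiesOver (Q.under (F ⊗[k] D)) := inferInstance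
    exact (cmDefect_localization_eq_of_tensorProduct_adjoin_simple x (Q.under (F ⊗[k] D))
      (Q.under (F⟮x⟯ ⊗[k] D))).trans hF

end FieldExtension

section TensorProduct

attribute [local instance] Algebra.TensorProduct.rightAlgebra

section BaseChange

variable (R k A K B : Type*) [CommRing R] [CommRing k] [CommRing A] [CommRing K] [CommRing B]
  [Algebra R k] [Algebra R A] [Algebra R K] [Algebra R B] [Algebra k K] [Algebra A K]
  [IsScalarTower R k K] [IsScalarTower R A K]

/-- Base change of `B` from `R` to `K` through `A` agrees with base change through `k`. -/
def baseChangeBaseChangeEquiv : K ⊗[A] (A ⊗[R] B) ≃+* K ⊗[k] (k ⊗[R] B) :=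
  ((Algebra.TensorProduct.cancelBaseChange R A K K B).trans
    (Algebra.TensorProduct.cancelBaseChange R k K K B).symm).toRingEquiv

variable {R k A K B}

theorem under_under_eq_of_eq_comap_baseChangeBaseChangeEquiv {Q : Ideal (K ⊗[A] (A ⊗[R] B))}
    {Q' : Ideal (K ⊗[k] (k ⊗[R] B))}
    (h : Q = Q'.comap (baseChangeBaseChangeEquiv R k A K B).toRingHom) :
    (Q.under (A ⊗[R] B)).under B = (Q'.under (k ⊗[R] B)).under B := by
  subst h
  simp_rw [Ideal.under_def, Ideal.comap_comap]
  congr 1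
  ext
  simp [baseChangeBaseChangeEquiv, RingHom.algebraMap_toAlgebra]

end BaseChange

variable {R : Type u} {A : Type v} {B : Type w} [CommRing R] [CommRing A] [CommRing B]
  [Algebra R A] [Algebra R B]

theorem flat_tensorProduct_right [Module.Flat R A] : Module.Flat B (A ⊗[R] B) :=
  .of_linearEquiv (Algebra.TensorProduct.commRight R B A).symm.toLinearEquiv

theorem faithfullyFlat_tensorProduct_right [Module.FaithfullyFlat R A] :
    Module.FaithfullyFlat B (A ⊗[R] B) :=
  .of_linearEquiv _ _ (Algebra.TensorProduct.commRight R B A).symm.toLinearEquiv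

theorem exists_isPrime_liesOver_liesOver (r : Ideal R) [r.IsPrime] (p : Ideal A) [p.IsPrime]
    [p.LiesOver r] (q : Ideal B) [q.IsPrime] [q.LiesOver r] :
    ∃ (Q : Ideal (A ⊗[R] B)) (_ : Q.IsPrime), Q.LiesOver p ∧ Q.LiesOver q := by
  let := (Ideal.ResidueField.map r p (algebraMap R A) Ideal.LiesOver.over).toAlgebra
  have : IsScalarTower R r.ResidueField p.ResidueField :=
    .of_algebraMap_eq fun x => (Ideal.ResidueField.map_algebraMap ..).symm
  obtain ⟨s, _, _⟩ := exists_fiber_liesOver r q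
  have := faithfullyFlat_tensorProduct_right (R := r.ResidueField) (A := p.ResidueField)
    (B := r.Fiber B)
  obtain ⟨⟨Q', _⟩, hQ'⟩ := PrimeSpectrum.comap_surjective_of_faithfullyFlat
    (B := p.ResidueField ⊗[r.ResidueField] r.Fiber B) ⟨s, ‹_›⟩
  let e := baseChangeBaseChangeEquiv R r.ResidueField A p.ResidueField B
  let Q : Ideal (p.Fiber (A ⊗[R] B)) := Q'.comap e.toRingHom
  refine ⟨Q.under (A ⊗[R] B), inferInstance, inferInstance, ⟨?_⟩⟩
  rw [under_under_eq_of_eq_comap_baseChangeBaseChangeEquiv rfl,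
    Ideal.LiesOver.over (P := s) (p := q)]
  exact congrArg (fun s => Ideal.under B s.asIdeal) hQ'.symm

theorem cmDefect_localization_tensorProduct_add [Module.Flat R A] [Module.Flat R B]
    (r : Ideal R) [r.IsPrime] (p : Ideal A) [p.IsPrime] [p.LiesOver r]
    (q : Ideal B) [q.IsPrime] [q.LiesOver r] (Q : Ideal (A ⊗[R] B)) [Q.IsPrime]
    [Q.LiesOver p] [Q.LiesOver q] [IsNoetherianRing (Localization.AtPrime Q)] :
    cmDefect (Localization.AtPrime Q) + cmDefect (Localization.AtPrime r) =
      cmDefect (Localization.AtPrime p) + cmDefect (Localization.AtPrime q) := by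
  let := (Ideal.ResidueField.map r p (algebraMap R A) Ideal.LiesOver.over).toAlgebra
  have : IsScalarTower R r.ResidueField p.ResidueField :=
    .of_algebraMap_eq fun x => (Ideal.ResidueField.map_algebraMap ..).symm
  obtain ⟨Q₀, _, _⟩ := exists_fiber_liesOver p Q
  have := isNoetherianRing_localization_fiber p Q Q₀
  let e := baseChangeBaseChangeEquiv R r.ResidueField A p.ResidueField B
  let Q₁ := Q₀.comap e.symm.toRingHom
  have hQ : Q₀ = Q₁.comap e.toRingHom := (Ideal.comap_of_equiv e).symm
  have := isNoetherianRing_localization_of_ringEquiv e.symm (p := Q₁) (q := Q₀) rfl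
  let s := Q₁.under (r.Fiber B)
  have : s.LiesOver q := by
    refine ⟨?_⟩
    rw [← under_under_eq_of_eq_comap_baseChangeBaseChangeEquiv hQ, ← Ideal.over_def Q₀ Q]
    exact Ideal.LiesOver.over
  have := flat_tensorProduct_right (R := R) (A := A) (B := B)
  have := isNoetherianRing_localization_of_liesOver q Q
  rw [cmDefect_localization_eq_add_fiber p Q Q₀, cmDefect_localization_eq_of_ringEquiv e hQ,
    cmDefect_localization_eq_add_fiber r q s, cmDefect_localization_eq_of_tensorProduct_field Q₁ s]
  ac_rfl

end TensorProduct

section AlmostCM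

open IsLocalRing

theorem isAlmostCMRing_localization_of_liesOver {A : Type u} {T : Type v} [CommRing A] [CommRing T]
    [Algebra A T] [Module.Flat A T] [IsNoetherianRing T] (hT : IsAlmostCMRing T) (p : Ideal A)
    [p.IsPrime] (Q : Ideal T) [Q.IsPrime] [Q.LiesOver p] :
    IsAlmostCMRing (Localization.AtPrime p) := by
  have (Q : Ideal T) [Q.IsPrime] : IsNoetherianRing (Localization.AtPrime Q) :=
    IsLocalization.isNoetherianRing Q.primeCompl _ inferInstance
  have := isNoetherianRing_localization_of_liesOver p Q
  refine isAlmostCMRing_iff_cmDefect_le_one.mpr fun P => ?_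
  let p' := P.asIdeal.under A
  have hp' : p' ≤ p := by
    rw [← Localization.AtPrime.under_maximalIdeal (I := p)]
    exact Ideal.comap_mono (le_maximalIdeal_of_isPrime P.asIdeal)
  have := Algebra.HasGoingDown.of_flat (R := A) (S := T)
  obtain ⟨Q', -, _, _⟩ := Ideal.exists_ideal_le_liesOver_of_le (p := p') (q := p) Q hp'
  calc cmDefect (Localization.AtPrime P.asIdeal)
    _ = cmDefect (Localization.AtPrime p') := cmDefect_eq_of_ringEquiv
        (IsLocalization.localizationLocalizationAtPrimeIsoLocalization
          p.primeCompl P.asIdeal).toRingEquiv.symm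
    _ ≤ cmDefect (Localization.AtPrime Q') := cmDefect_localization_le_of_liesOver p' Q'
    _ ≤ 1 := isAlmostCMRing_iff_cmDefect_le_one.mp hT ⟨Q', inferInstance⟩

theorem cmDefect_le_one_of_isAlmostCMRing {A : Type*} [CommRing A] [IsLocalRing A]
    [IsNoetherianRing A] (h : IsAlmostCMRing A) : cmDefect A ≤ 1 :=
  (cmDefect_eq_of_ringEquiv (IsLocalization.atUnits A (maximalIdeal A).primeCompl
    fun _ hx => notMem_maximalIdeal.mp hx).toRingEquiv).trans_le
      (isAlmostCMRing_iff_cmDefect_le_one.mp h ⟨maximalIdeal A, inferInstance⟩)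

end AlmostCM

theorem tensor_flat_algebras_almostCM (R : Type u) [CommRing R]
    (A : Type v) (B : Type w) [CommRing A] [CommRing B] [Algebra R A] [Algebra R B]
    [Module.Flat R A] [Module.Flat R B] [IsNoetherianRing (A ⊗[R] B)] :
    (IsAlmostCMRing (A ⊗[R] B) →
      ∀ (p : PrimeSpectrum A) (q : PrimeSpectrum B),
        PrimeSpectrum.comap (algebraMap R A) p = PrimeSpectrum.comap (algebraMap R B) q →
        IsAlmostCMRing (Localization.AtPrime p.asIdeal) ∧
          IsAlmostCMRing (Localization.AtPrime q.asIdeal)) ∧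
    ((∀ (p : PrimeSpectrum A) (q : PrimeSpectrum B),
        PrimeSpectrum.comap (algebraMap R A) p = PrimeSpectrum.comap (algebraMap R B) q →
        IsAlmostCMRing (Localization.AtPrime p.asIdeal) ∧
          IsAlmostCMRing (Localization.AtPrime q.asIdeal) ∧
          (IsLocalCMRing (Localization.AtPrime p.asIdeal) ∨
            IsLocalCMRing (Localization.AtPrime q.asIdeal))) →
      IsAlmostCMRing (A ⊗[R] B)) := by
  let : Algebra B (A ⊗[R] B) := Algebra.TensorProduct.rightAlgebra
  have := flat_tensorProduct_right (R := R) (A := A) (B := B)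
  refine ⟨fun hT p q hpq => ?_, fun h => isAlmostCMRing_iff_cmDefect_le_one.mpr fun Q => ?_⟩
  · have : q.asIdeal.LiesOver (p.asIdeal.under R) := ⟨congrArg PrimeSpectrum.asIdeal hpq⟩
    obtain ⟨Q, _, _, _⟩ :=
      exists_isPrime_liesOver_liesOver (p.asIdeal.under R) p.asIdeal q.asIdeal
    exact ⟨isAlmostCMRing_localization_of_liesOver hT p.asIdeal Q,
      isAlmostCMRing_localization_of_liesOver hT q.asIdeal Q⟩
  · have : IsNoetherianRing (Localization.AtPrime Q.asIdeal) :=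
      IsLocalization.isNoetherianRing Q.asIdeal.primeCompl _ inferInstance
    let p := Q.asIdeal.under A
    let q := Q.asIdeal.under B
    have := isNoetherianRing_localization_of_liesOver p Q.asIdeal
    have := isNoetherianRing_localization_of_liesOver q Q.asIdeal
    have hpq : p.under R = q.under R := by rw [Ideal.under_under, Ideal.under_under]
    obtain ⟨hp, hq, hCM⟩ := h ⟨p, inferInstance⟩ ⟨q, inferInstance⟩ (PrimeSpectrum.ext hpq)
    rw [← cmDefect_eq_zero_iff, ← cmDefect_eq_zero_iff] at hCM
    have hadd := cmDefect_localization_tensorProduct_add (Q.asIdeal.under R) p q Q.asIdeal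
    have hp1 := cmDefect_le_one_of_isAlmostCMRing hp
    have hq1 := cmDefect_le_one_of_isAlmostCMRing hq
    lia

end
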